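/- arXiv:2212.09414 — 5 statements merged into one kernel-verified Lean document; each statement's English description precedes it below -/
import Mathlib

section
/- Let 𝓗 be a complex separable Hilbert space and write B(𝓗) for the algebra of bounded operators on 𝓗. For each a ∈ P let α_a and β_a be unital ⋆-algebra endomorphisms of B(𝓗) such that α_a ∘ α_b = α_{a+b} and β_a ∘ β_b = β_{a+b} for all a,b ∈ P, and such that each β_a is injective. Suppose there is a family (U_a)_{a∈Ω} of unitary operators on 𝓗 satisfying U_a · α_a(U_b) = U_{a+b} for all a,b ∈ Ω and β_a(X) = U_a · α_a(X) · U_a* for all X ∈ B(𝓗) and all a ∈ Ω. Then there exists a family (W_a)_{a∈P} of unitary operators on 𝓗 with W_a = U_a for a ∈ Ω, W_a · α_a(W_b) = W_{a+b} for all a,b ∈ P, and β_a(X) = W_a · α_a(X) · W_a* for all X ∈ B(𝓗) and all a ∈ P. -/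
/-!
Write `Ω = interior P`. For `x ∈ P` the cocycle identity forces `W x * α x (U a) = U (x + a)`
for every `a ∈ Ω`, so the only candidate is `W x = U (x + a) * α x (U a)⋆`. The cocycle identity for `U` shows that this expression
is unchanged when `a` is replaced by `a + b`, and hence (as `a + b = b + a`) that it does not
depend on `a`. Choosing `a` freely yields `W = U` on `Ω` and the cocycle identity on `P`. For the
conjugacy, apply `β a` with `a ∈ Ω` to both `β x X` and `W x * α x X * (W x)⋆`: both images equal
`β (a + x) X`, and `β a` is injective.

The geometric input is `Ω ≠ ∅` (`interior_nonempty_of_spanning_cone`) and `P + Ω ⊆ Ω`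
(`add_mem_interior_of_add_mem`).
-/

open MeasureTheory

/-- A convex set containing the origin and generating the space linearly has affine span everything,
hence nonempty interior in finite dimension. -/
lemma interior_nonempty_of_spanning_cone {d : ℕ} {P : Set (EuclideanSpace ℝ (Fin d))}
    (hconv : Convex ℝ P) (h0 : (0 : EuclideanSpace ℝ (Fin d)) ∈ P)
    (hspan : ∀ x : EuclideanSpace ℝ (Fin d), ∃ a ∈ P, ∃ b ∈ P, x = a - b) :
    (interior P).Nonempty := by
  rw [hconv.interior_nonempty_iff_affineSpan_eq_top, eq_top_iff]
  rintro x -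
  obtain ⟨a, ha, b, hb, rfl⟩ := hspan x
  -- `a - b` is the affine combination `a -ᵥ b +ᵥ 0` of points of `P`.
  simpa using (affineSpan ℝ P).smul_vsub_vadd_mem 1
    (subset_affineSpan ℝ P ha) (subset_affineSpan ℝ P hb) (subset_affineSpan ℝ P h0)

lemma add_mem_interior_of_add_mem {E : Type*} [TopologicalSpace E] [AddCommGroup E]
    [IsTopologicalAddGroup E] {P : Set E} (hadd : ∀ x ∈ P, ∀ y ∈ P, x + y ∈ P)
    {x a : E} (hx : x ∈ P) (ha : a ∈ interior P) : x + a ∈ interior P := by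
  -- The translate of `interior P` by `x` is an open subset of `P`.
  have hopen : IsOpen ((fun y => x + y) '' interior P) :=
    (Homeomorph.addLeft x).isOpenMap _ isOpen_interior
  refine interior_maximal ?_ hopen ⟨a, ha, rfl⟩
  rintro _ ⟨y, hy, rfl⟩
  exact hadd x hx y (interior_subset hy)

/-- An algebraic `E₀`-semigroup cocycle conjugacy over the interior `Ω`
of the cone `P` extends to a cocycle conjugacy over all of `P`. -/
theorem extend_cocycle_conjugacy_from_interior
    {d : ℕ} (P : Set (EuclideanSpace ℝ (Fin d)))
    (hPclosed : IsClosed P) (hPconvex : Convex ℝ P)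
    (hPcone : ∀ (c : ℝ), 0 ≤ c → ∀ x ∈ P, c • x ∈ P)
    (hPspan : ∀ x : EuclideanSpace ℝ (Fin d), ∃ a ∈ P, ∃ b ∈ P, x = a - b)
    (hPpointed : ∀ x ∈ P, -x ∈ P → x = 0)
    {H : Type*} [NormedAddCommGroup H] [InnerProductSpace ℂ H]
    [CompleteSpace H] [TopologicalSpace.SeparableSpace H]
    (α β : EuclideanSpace ℝ (Fin d) → ((H →L[ℂ] H) →⋆ₐ[ℂ] (H →L[ℂ] H)))
    (hα : ∀ a ∈ P, ∀ b ∈ P, (α a).comp (α b) = α (a + b))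
    (hβ : ∀ a ∈ P, ∀ b ∈ P, (β a).comp (β b) = β (a + b))
    (hβinj : ∀ a ∈ P, Function.Injective (β a))
    (U : EuclideanSpace ℝ (Fin d) → (H →L[ℂ] H))
    (hUunitary : ∀ a ∈ interior P, U a ∈ unitary (H →L[ℂ] H))
    (hUcoc : ∀ a ∈ interior P, ∀ b ∈ interior P, U a * α a (U b) = U (a + b))
    (hUconj : ∀ a ∈ interior P, ∀ X : H →L[ℂ] H, β a X = U a * α a X * star (U a)) :
    ∃ W : EuclideanSpace ℝ (Fin d) → (H →L[ℂ] H),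
      (∀ a ∈ interior P, W a = U a) ∧
      (∀ a ∈ P, W a ∈ unitary (H →L[ℂ] H)) ∧
      (∀ a ∈ P, ∀ b ∈ P, W a * α a (W b) = W (a + b)) ∧
      (∀ a ∈ P, ∀ X : H →L[ℂ] H, β a X = W a * α a X * star (W a)) := by
  have h0 : (0 : EuclideanSpace ℝ (Fin d)) ∈ P := by
    obtain ⟨a, ha, -⟩ := hPspan 0
    simpa using hPcone 0 le_rfl a ha
  have hadd : ∀ x ∈ P, ∀ y ∈ P, x + y ∈ P := by
    intro x hx y hy
    have hmid := hPconvex hx hy (a := 1 / 2) (b := 1 / 2) (by norm_num) (by norm_num) (by norm_num)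
    have h2 := hPcone 2 (by norm_num) _ hmid
    rwa [smul_add, smul_smul, smul_smul, mul_one_div_cancel (two_ne_zero' ℝ), one_smul,
      one_smul] at h2
  have hΩ : ∀ {x a}, x ∈ P → a ∈ interior P → x + a ∈ interior P :=
    fun hx ha => add_mem_interior_of_add_mem hadd hx ha
  obtain ⟨e, he⟩ := interior_nonempty_of_spanning_cone hPconvex h0 hPspan
  have hsub : ∀ {a}, a ∈ interior P → a ∈ P := fun h => interior_subset h
  have hα' : ∀ a ∈ P, ∀ b ∈ P, ∀ X, α a (α b X) = α (a + b) X :=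
    fun a ha b hb X => DFunLike.congr_fun (hα a ha b hb) X
  have hβ' : ∀ a ∈ P, ∀ b ∈ P, ∀ X, β a (β b X) = β (a + b) X :=
    fun a ha b hb X => DFunLike.congr_fun (hβ a ha b hb) X
  have hαU : ∀ x, ∀ a ∈ interior P, α x (U a) ∈ unitary (H →L[ℂ] H) :=
    fun x a ha => Unitary.map_mem (α x) (hUunitary a ha)
  -- Replacing `a` by `a + b` does not change the candidate for `W x`.
  have hshift : ∀ x ∈ P, ∀ a ∈ interior P, ∀ b ∈ interior P,
      U (x + (a + b)) * star (α x (U (a + b))) = U (x + a) * star (α x (U a)) := by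
    intro x hx a ha b hb
    rw [← add_assoc, ← hUcoc _ (hΩ hx ha) b hb, ← hUcoc a ha b hb, map_mul, star_mul,
      hα' x hx a (hsub ha), mul_assoc, ← mul_assoc (α (x + a) (U b)),
      Unitary.mul_star_self_of_mem (hαU _ b hb), one_mul]
  have hindep : ∀ x ∈ P, ∀ a ∈ interior P, ∀ b ∈ interior P,
      U (x + a) * star (α x (U a)) = U (x + b) * star (α x (U b)) := by
    intro x hx a ha b hb
    rw [← hshift x hx a ha b hb, add_comm a b, hshift x hx b hb a ha]
  let W : EuclideanSpace ℝ (Fin d) → (H →L[ℂ] H) := fun x => U (x + e) * star (α x (U e))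
  have hW : ∀ x ∈ P, ∀ a ∈ interior P, W x = U (x + a) * star (α x (U a)) :=
    fun x hx a ha => hindep x hx e he a ha
  have hWU : ∀ a ∈ interior P, W a = U a := by
    intro a ha
    rw [hW a (hsub ha) a ha, ← hUcoc a ha a ha, mul_assoc,
      Unitary.mul_star_self_of_mem (hαU _ a ha), mul_one]
  have hWcoc : ∀ a ∈ P, ∀ b ∈ P, W a * α a (W b) = W (a + b) := by
    intro a ha b hb
    -- Evaluate `W a` at `b + e ∈ Ω`, so that the inner factors cancel.
    rw [hW a ha (b + e) (hΩ hb he), hW b hb e he, hW (a + b) (hadd a ha b hb) e he, map_mul,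
      map_star, hα' a ha b hb, mul_assoc, ← mul_assoc (star (α a (U (b + e)))),
      Unitary.star_mul_self_of_mem (hαU _ _ (hΩ hb he)), one_mul, add_assoc]
  refine ⟨W, hWU, fun a ha => ?_, hWcoc, fun x hx X => ?_⟩
  · exact mul_mem (hUunitary _ (hΩ ha he)) (Unitary.star_mem (hαU a e he))
  · apply hβinj e (hsub he)
    have hex : e + x ∈ interior P := add_comm x e ▸ hΩ hx he
    have hc : U e * α e (W x) = U (e + x) := by
      rw [← hWU e he, ← hWU _ hex, hWcoc e (hsub he) x hx]
    rw [hβ' e (hsub he) x hx, hUconj _ hex, hUconj e he, map_mul, map_mul, map_star,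
      hα' e (hsub he) x hx, ← hc, star_mul]
    simp only [mul_assoc]
end

section
/- Let V be a pure isometric representation of P on a complex separable Hilbert space 𝓗. Suppose ξ : P → 𝓗 satisfies ξ_a = (1 − V_a V_a*) ξ_b whenever a, b ∈ P with a ≤ b (such a map is called coherent). Then ξ is continuous on P, and ξ_a → 0 as a → 0 along P. -/
/-!
The range projections `V a (V a)*` are strongly continuous in `a ∈ P`, and near a given point of `P`
a coherent family has the form `ξ a = ξ u - V a (V a)* (ξ u)` with one fixed `u` dominating that
neighbourhood; hence `ξ` is continuous. Since `V 0 = 1`, this formula gives `ξ 0 = 0`, so the limit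
at `0` is `0`.

Strong continuity comes down to that of `a ↦ (V a)* x`. Two points `a, b` of `P` satisfy
`a + p = b + s` with `p, s ∈ P` tending to `0` as `a → b`, because `P` spans
(`exists_continuous_decomp`). The operators `(V a)*` commute and are contractions, so
`(V a)* x - (V (a + p))* x = (V a)* (x - (V p)* x)` has norm at most
`‖x - (V p)* x‖ = ‖(V p)* (V p x - x)‖ ≤ ‖V p x - x‖`, and the same holds for `b` and `s`. This is
`norm_adjoint_sub_adjoint_le`; it is uniform in `a`, so it needs no assumption that `b` is an
interior point of `P`.
-/

/-- Every vector is a difference of elements of `P` depending continuously on it and vanishing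
at `0`, and all small vectors are dominated by a single `w`. -/
lemma exists_continuous_decomp {d : ℕ} (P : Set (EuclideanSpace ℝ (Fin d)))
    (hP0 : (0 : EuclideanSpace ℝ (Fin d)) ∈ P)
    (hPadd : ∀ x ∈ P, ∀ y ∈ P, x + y ∈ P)
    (hPcone : ∀ (c : ℝ), 0 ≤ c → ∀ x ∈ P, c • x ∈ P)
    (hPspan : ∀ x : EuclideanSpace ℝ (Fin d), ∃ a ∈ P, ∃ b ∈ P, x = a - b) :
    ∃ s p : EuclideanSpace ℝ (Fin d) → EuclideanSpace ℝ (Fin d), ∃ w ∈ P,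
      Continuous s ∧ Continuous p ∧ s 0 = 0 ∧ p 0 = 0 ∧
      (∀ x, s x ∈ P) ∧ (∀ x, p x ∈ P) ∧ (∀ x, x + p x = s x) ∧
      ∀ᶠ x in nhds 0, w - x ∈ P := by
  have hsum : ∀ f : Fin d → EuclideanSpace ℝ (Fin d), (∀ i, f i ∈ P) → ∑ i, f i ∈ P := by
    intro f hf
    exact Finset.sum_induction f (· ∈ P) (fun x y hx hy => hPadd x hx y hy) hP0 (fun i _ => hf i)
  choose A hA B hB hAB using fun i : Fin d => hPspan (EuclideanSpace.single i 1)
  -- Split each coordinate into its positive and negative part.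
  set s : EuclideanSpace ℝ (Fin d) → EuclideanSpace ℝ (Fin d) :=
    fun x => ∑ i, (max (x i) 0 • A i + max (-x i) 0 • B i) with hs
  set p : EuclideanSpace ℝ (Fin d) → EuclideanSpace ℝ (Fin d) :=
    fun x => ∑ i, (max (x i) 0 • B i + max (-x i) 0 • A i) with hp
  have hsP : ∀ x, s x ∈ P := fun x => hsum _ fun i =>
    hPadd _ (hPcone _ (le_max_right _ _) _ (hA i)) _ (hPcone _ (le_max_right _ _) _ (hB i))
  have hpP : ∀ x, p x ∈ P := fun x => hsum _ fun i =>
    hPadd _ (hPcone _ (le_max_right _ _) _ (hB i)) _ (hPcone _ (le_max_right _ _) _ (hA i))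
  have hdec : ∀ x, x + p x = s x := by
    intro x
    have hx : x = ∑ i, x i • (A i - B i) := by
      have h := (EuclideanSpace.basisFun (Fin d) ℝ).sum_repr x
      simp only [EuclideanSpace.basisFun_repr, EuclideanSpace.basisFun_apply] at h
      rw [← h]
      simp only [← hAB, h]
    nth_rewrite 1 [hx]
    simp only [hs, hp, ← Finset.sum_add_distrib]
    refine Finset.sum_congr rfl fun i _ => ?_
    have hpm : x i = max (x i) 0 - max (-x i) 0 := by
      rcases le_total (x i) 0 with h | h
      · rw [max_eq_right h, max_eq_left (by linarith)]; ring
      · rw [max_eq_left h, max_eq_right (by linarith)]; ring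
    have hpm' : x i • (A i - B i) = (max (x i) 0 - max (-x i) 0) • (A i - B i) := by
      rw [← hpm]
    rw [hpm']
    module
  refine ⟨s, p, ∑ i, (A i + B i), hsum _ fun i => hPadd _ (hA i) _ (hB i), by fun_prop,
    by fun_prop, by simp [hs], by simp [hp], hsP, hpP, hdec, ?_⟩
  have hev : ∀ᶠ x : EuclideanSpace ℝ (Fin d) in nhds 0, ∀ i, x i < 1 ∧ -x i < 1 := by
    rw [Filter.eventually_all]
    intro i
    have hc : Continuous fun x : EuclideanSpace ℝ (Fin d) => x i := by fun_prop
    have h0 : Filter.Tendsto (fun x : EuclideanSpace ℝ (Fin d) => x i) (nhds 0) (nhds 0) := by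
      simpa using hc.tendsto 0
    have h1 : Filter.Tendsto (fun x : EuclideanSpace ℝ (Fin d) => -x i) (nhds 0) (nhds 0) := by
      simpa using h0.neg
    exact (h0.eventually_lt_const one_pos).and (h1.eventually_lt_const one_pos)
  filter_upwards [hev] with x hx
  have key : ∑ i, (A i + B i) - x
      = p x + ∑ i, ((1 - max (x i) 0) • A i + (1 - max (-x i) 0) • B i) := by
    have h2 : ∑ i, ((1 - max (x i) 0) • A i + (1 - max (-x i) 0) • B i)
        = ∑ i, (A i + B i) - s x := by
      simp only [hs, ← Finset.sum_sub_distrib]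
      refine Finset.sum_congr rfl fun i _ => ?_
      module
    rw [h2, ← hdec x]
    abel
  rw [key]
  refine hPadd _ (hpP x) _ (hsum _ fun i => hPadd _ (hPcone _ ?_ _ (hA i)) _ (hPcone _ ?_ _ (hB i)))
  · exact sub_nonneg.2 (max_le (hx i).1.le zero_le_one)
  · exact sub_nonneg.2 (max_le (hx i).2.le zero_le_one)

section Isometric

variable {E H : Type*} [AddCommGroup E] [NormedAddCommGroup H] [InnerProductSpace ℂ H]
  [CompleteSpace H] {P : Set E} {V : E → (H →L[ℂ] H)}

lemma adjoint_apply_apply_of_isometry {T : H →L[ℂ] H} (hT : ∀ x, ‖T x‖ = ‖x‖) (x : H) :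
    ContinuousLinearMap.adjoint T (T x) = x := by
  have h := (ContinuousLinearMap.norm_map_iff_adjoint_comp_self T).1 hT
  exact congrArg (fun S : H →L[ℂ] H => S x) h

lemma norm_adjoint_apply_le_of_isometry {T : H →L[ℂ] H} (hT : ∀ x, ‖T x‖ = ‖x‖) (x : H) :
    ‖ContinuousLinearMap.adjoint T x‖ ≤ ‖x‖ := by
  have h1 : ‖ContinuousLinearMap.adjoint T‖ ≤ 1 := by
    rw [LinearIsometryEquiv.norm_map]
    exact T.opNorm_le_bound zero_le_one fun y => by rw [hT, one_mul]
  simpa using ContinuousLinearMap.le_of_opNorm_le _ h1 x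

lemma norm_adjoint_sub_adjoint_add_le
    (hViso : ∀ a ∈ P, ∀ x : H, ‖V a x‖ = ‖x‖)
    (hVmul : ∀ a ∈ P, ∀ b ∈ P, (V a).comp (V b) = V (a + b))
    {a p : E} (ha : a ∈ P) (hp : p ∈ P) (x : H) :
    ‖ContinuousLinearMap.adjoint (V a) x - ContinuousLinearMap.adjoint (V (a + p)) x‖
      ≤ ‖V p x - x‖ := by
  have h : ContinuousLinearMap.adjoint (V (a + p)) x
      = ContinuousLinearMap.adjoint (V a) (ContinuousLinearMap.adjoint (V p) x) := by
    rw [add_comm, ← hVmul p hp a ha, ContinuousLinearMap.adjoint_comp]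
    rfl
  rw [h, ← map_sub]
  refine (norm_adjoint_apply_le_of_isometry (hViso a ha) _).trans ?_
  have h2 : x - ContinuousLinearMap.adjoint (V p) x
      = ContinuousLinearMap.adjoint (V p) (V p x - x) := by
    rw [map_sub, adjoint_apply_apply_of_isometry (hViso p hp)]
  rw [h2]
  exact norm_adjoint_apply_le_of_isometry (hViso p hp) _

lemma norm_adjoint_sub_adjoint_le
    (hViso : ∀ a ∈ P, ∀ x : H, ‖V a x‖ = ‖x‖)
    (hVmul : ∀ a ∈ P, ∀ b ∈ P, (V a).comp (V b) = V (a + b))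
    {a b p s : E} (ha : a ∈ P) (hb : b ∈ P) (hp : p ∈ P) (hs : s ∈ P) (h : a + p = b + s) (x : H) :
    ‖ContinuousLinearMap.adjoint (V a) x - ContinuousLinearMap.adjoint (V b) x‖
      ≤ ‖V p x - x‖ + ‖V s x - x‖ := by
  have h1 := norm_adjoint_sub_adjoint_add_le hViso hVmul ha hp x
  have h2 := norm_adjoint_sub_adjoint_add_le hViso hVmul hb hs x
  rw [norm_sub_rev, ← h] at h2
  exact (norm_sub_le_norm_sub_add_norm_sub _ _ _).trans (add_le_add h1 h2)

end Isometric

/-- A coherent family of vectors for a pure isometric representation of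
the cone `P` is continuous on `P` and tends to `0` at `0` along `P`. -/
theorem coherent_family_continuous
    {d : ℕ} (P : Set (EuclideanSpace ℝ (Fin d)))
    (hPclosed : IsClosed P) (hPconvex : Convex ℝ P)
    (hPcone : ∀ (c : ℝ), 0 ≤ c → ∀ x ∈ P, c • x ∈ P)
    (hPspan : ∀ x : EuclideanSpace ℝ (Fin d), ∃ a ∈ P, ∃ b ∈ P, x = a - b)
    (hPpointed : ∀ x ∈ P, -x ∈ P → x = 0)
    {H : Type*} [NormedAddCommGroup H] [InnerProductSpace ℂ H]
    [CompleteSpace H] [TopologicalSpace.SeparableSpace H]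
    (V : EuclideanSpace ℝ (Fin d) → (H →L[ℂ] H))
    (hViso : ∀ a ∈ P, ∀ x : H, ‖V a x‖ = ‖x‖)
    (hVmul : ∀ a ∈ P, ∀ b ∈ P, (V a).comp (V b) = V (a + b))
    (hVcont : ∀ x : H, ContinuousOn (fun a => V a x) P)
    (hVpure : (⋂ a ∈ P, Set.range (V a)) = ({0} : Set H))
    (ξ : EuclideanSpace ℝ (Fin d) → H)
    (hcoherent : ∀ a ∈ P, ∀ b ∈ P, b - a ∈ P →
      ξ a = ξ b - V a (ContinuousLinearMap.adjoint (V a) (ξ b))) :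
    ContinuousOn ξ P ∧
      Filter.Tendsto ξ (nhdsWithin (0 : EuclideanSpace ℝ (Fin d)) P) (nhds (0 : H)) := by
  have hP0 : (0 : EuclideanSpace ℝ (Fin d)) ∈ P := by
    obtain ⟨a, ha, -⟩ := hPspan 0
    simpa using hPcone 0 le_rfl a ha
  have hPadd : ∀ x ∈ P, ∀ y ∈ P, x + y ∈ P := by
    intro x hx y hy
    have h := hPcone 2 zero_le_two _
      (hPconvex hx hy (a := 1 / 2) (b := 1 / 2) (by norm_num) (by norm_num) (by norm_num))
    have he : (2 : ℝ) • ((1 / 2 : ℝ) • x + (1 / 2 : ℝ) • y) = x + y := by module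
    rwa [he] at h
  obtain ⟨s, p, w, hw, hsc, hpc, hs0, hp0, hsP, hpP, hdec, hdom⟩ :=
    exists_continuous_decomp P hP0 hPadd hPcone hPspan
  -- `V 0` is an injective idempotent.
  have hV0 : ∀ x, V 0 x = x := by
    intro x
    have h1 : V 0 (V 0 x) = V 0 x := by
      have h := congrArg (fun S : H →L[ℂ] H => S x) (hVmul 0 hP0 0 hP0)
      simpa using h
    have h2 := hViso 0 hP0 (V 0 x - x)
    rw [map_sub, h1, sub_self, norm_zero] at h2
    exact sub_eq_zero.1 (norm_eq_zero.1 h2.symm)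
  have hξ0 : ξ 0 = 0 := by
    rw [hcoherent 0 hP0 0 hP0 (by simpa using hP0)]
    have h := adjoint_apply_apply_of_isometry (hViso 0 hP0) (ξ 0)
    rw [hV0] at h
    rw [h, hV0, sub_self]
  have hcont : ContinuousOn ξ P := by
    intro b hb
    have hx0 : Filter.Tendsto (fun a => a - b) (nhdsWithin b P) (nhds 0) := by
      have hc : Continuous fun a : EuclideanSpace ℝ (Fin d) => a - b := by fun_prop
      simpa using (hc.tendsto b).mono_left nhdsWithin_le_nhds
    have hsmall : ∀ (q : EuclideanSpace ℝ (Fin d) → EuclideanSpace ℝ (Fin d)), Continuous q →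
        q 0 = 0 → (∀ x, q x ∈ P) → ∀ y : H,
        Filter.Tendsto (fun a => ‖V (q (a - b)) y - y‖) (nhdsWithin b P) (nhds 0) := by
      intro q hq hq0 hqP y
      have h1 : Filter.Tendsto (fun a => q (a - b)) (nhdsWithin b P) (nhdsWithin 0 P) := by
        refine tendsto_nhdsWithin_iff.2 ⟨?_, Filter.Eventually.of_forall fun a => hqP _⟩
        have h := (hq.tendsto 0).comp hx0
        rwa [hq0] at h
      have h2 := (hVcont y 0 hP0).tendsto.comp h1
      simp only [hV0] at h2
      exact tendsto_iff_norm_sub_tendsto_zero.1 h2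
    have hadj : ∀ y : H, Filter.Tendsto (fun a => ContinuousLinearMap.adjoint (V a) y)
        (nhdsWithin b P) (nhds (ContinuousLinearMap.adjoint (V b) y)) := by
      intro y
      rw [tendsto_iff_norm_sub_tendsto_zero]
      have hlim := (hsmall p hpc hp0 hpP y).add (hsmall s hsc hs0 hsP y)
      rw [add_zero] at hlim
      refine squeeze_zero' (Filter.Eventually.of_forall fun _ => norm_nonneg _) ?_ hlim
      filter_upwards [self_mem_nhdsWithin] with a ha
      refine norm_adjoint_sub_adjoint_le hViso hVmul ha hb (hpP _) (hsP _) ?_ y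
      rw [← hdec]
      abel
    have hproj : ∀ y : H, Filter.Tendsto (fun a => V a (ContinuousLinearMap.adjoint (V a) y))
        (nhdsWithin b P) (nhds (V b (ContinuousLinearMap.adjoint (V b) y))) := by
      intro y
      have h1 := tendsto_iff_norm_sub_tendsto_zero.1 (hadj y)
      have h2 := tendsto_iff_norm_sub_tendsto_zero.1
        (hVcont (ContinuousLinearMap.adjoint (V b) y) b hb).tendsto
      rw [tendsto_iff_norm_sub_tendsto_zero]
      have hlim := h1.add h2
      rw [add_zero] at hlim
      refine squeeze_zero' (Filter.Eventually.of_forall fun _ => norm_nonneg _) ?_ hlim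
      filter_upwards [self_mem_nhdsWithin] with a ha
      rw [← hViso a ha (ContinuousLinearMap.adjoint (V a) y - ContinuousLinearMap.adjoint (V b) y),
        map_sub]
      exact norm_sub_le_norm_sub_add_norm_sub _ _ _
    -- Near `b`, the family is cut out of the single vector `ξ (b + w)`.
    have hu : b + w ∈ P := hPadd _ hb _ hw
    have hform : ∀ a ∈ P, w - (a - b) ∈ P →
        ξ a = ξ (b + w) - V a (ContinuousLinearMap.adjoint (V a) (ξ (b + w))) := by
      intro a ha h
      refine hcoherent a ha _ hu ?_
      have he : b + w - a = w - (a - b) := by abel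
      rwa [he]
    have hlim := (tendsto_const_nhds (x := ξ (b + w))).sub (hproj (ξ (b + w)))
    rw [← hform b hb (by simpa using hw)] at hlim
    refine Filter.Tendsto.congr' ?_ hlim
    filter_upwards [self_mem_nhdsWithin, hx0.eventually hdom] with a ha h
    exact (hform a ha h).symm
  refine ⟨hcont, ?_⟩
  have h := (hcont 0 hP0).tendsto
  rwa [hξ0] at h
end

section
/- Let H be a closed subgroup of ℝ^{d−1} × ℝ and let φ : ℝ^{d−1} → ℝ be a continuous function such that φ(y + h₁) = φ(y) + h₂ for every y ∈ ℝ^{d−1} and every (h₁, h₂) ∈ H. Let H₀ := { y : (y,t) ∈ H for some t } (a closed subgroup of ℝ^{d−1}), let π : ℝ^{d−1} × ℝ → (ℝ^{d−1} × ℝ)/H and η : ℝ^{d−1} → ℝ^{d−1}/H₀ be the quotient maps, let Ã = {(y,t) : t ≥ φ(y)} and A = π(Ã). Then: (1) the formula Δ(η(y), t) = π(y, φ(y) + t) gives a well-defined map Δ : (ℝ^{d−1}/H₀) × ℝ → (ℝ^{d−1} × ℝ)/H which is a homeomorphism; (2) Δ((ℝ^{d−1}/H₀) × [0,∞)) = A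 and Δ((ℝ^{d−1}/H₀) × {0}) = ∂A, the topological boundary of A; (3) the pushforward under Δ of μ₁ ⊗ μ₂, where μ₁ is a Haar measure on ℝ^{d−1}/H₀ and μ₂ is Lebesgue measure on ℝ, is a translation-invariant (hence Haar) measure on the group (ℝ^{d−1} × ℝ)/H. -/
/-!
The shear `(y, t) ↦ (y, φ y + t)` is a self-homeomorphism of `ℝ^{d-1} × ℝ`. Equivariance of `φ`
says that it turns translation by `(h₁, 0)` into translation by `(h₁, h₂)`, and that `h₂` is
determined by `h₁`, so it carries the fibres of the open quotient map `η × id` onto those of `π`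
and descends to a homeomorphism `Δ` (`exists_shear_homeomorph`). In these coordinates `A` is
`univ ×ˢ Ici 0`, whose frontier is `univ ×ˢ {0}`. Translation by an element of the quotient becomes
`(x, t) ↦ (η a + x, t + c x)` with `c` continuous, a skew product of translations, which
preserves `μ₁ ⊗ Lebesgue` by Fubini (`map_prod_isAddLeftInvariant`).
-/

open MeasureTheory

/-- The shear by `φ` descends to a homeomorphism of the quotients. -/
theorem exists_shear_homeomorph {E : Type*} [AddCommGroup E] [TopologicalSpace E]
    [IsTopologicalAddGroup E] (H : AddSubgroup (E × ℝ)) (φ : E → ℝ) (hφ : Continuous φ)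
    (hequiv : ∀ y : E, ∀ h ∈ H, φ (y + h.1) = φ y + h.2)
    (H₀ : AddSubgroup E) (hH₀ : (H₀ : Set E) = {y | ∃ t : ℝ, (y, t) ∈ H}) :
    ∃ Δ : (E ⧸ H₀) × ℝ ≃ₜ ((E × ℝ) ⧸ H),
      ∀ (y : E) (t : ℝ), Δ ((y : E ⧸ H₀), t) = ((y, φ y + t) : E × ℝ) := by
  have hmem : ∀ y, y ∈ H₀ ↔ ∃ t : ℝ, (y, t) ∈ H := fun y => by
    rw [← SetLike.mem_coe, hH₀]; rfl
  let Φ : E × ℝ ≃ₜ E × ℝ :=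
    { toFun := fun p => (p.1, φ p.1 + p.2)
      invFun := fun p => (p.1, p.2 - φ p.1)
      left_inv := fun p => by simp
      right_inv := fun p => by simp
      continuous_toFun := by fun_prop
      continuous_invFun := by fun_prop }
  let q : E × ℝ → (E ⧸ H₀) × ℝ := Prod.map (fun y => (y : E ⧸ H₀)) id
  have hqs : Function.Surjective q :=
    (QuotientAddGroup.mk_surjective).prodMap Function.surjective_id
  have hqc : Continuous q := (QuotientAddGroup.continuous_mk).prodMap continuous_id
  have hqo : IsOpenMap q := (QuotientAddGroup.isOpenMap_coe).prodMap IsOpenMap.id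
  let F : (E ⧸ H₀) × ℝ → (E × ℝ) ⧸ H := fun p =>
    Quotient.liftOn' p.1 (fun y => (((y, φ y + p.2) : E × ℝ) : (E × ℝ) ⧸ H)) (by
      intro a b hab
      rw [QuotientAddGroup.leftRel_apply, hmem] at hab
      obtain ⟨t, ht⟩ := hab
      have h := hequiv a _ ht
      refine QuotientAddGroup.eq.2 ?_
      convert ht using 1
      ext
      · simp
      · simp only [add_neg_cancel_left] at h
        simp only [Prod.snd_add, Prod.snd_neg, h]
        ring)
  have hF : ∀ (y : E) (t : ℝ), F ((y : E ⧸ H₀), t) = ((y, φ y + t) : E × ℝ) := fun _ _ => rfl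
  have hFq : F ∘ q = (fun p : E × ℝ => (p : (E × ℝ) ⧸ H)) ∘ Φ := rfl
  have hinj : Function.Injective F := by
    rintro ⟨x, s⟩ ⟨x', t⟩ h
    obtain ⟨y, rfl⟩ := QuotientAddGroup.mk_surjective x
    obtain ⟨z, rfl⟩ := QuotientAddGroup.mk_surjective x'
    rw [hF, hF, QuotientAddGroup.eq] at h
    have h2 := hequiv y _ h
    simp only [Prod.fst_add, Prod.fst_neg, Prod.snd_add, Prod.snd_neg, add_neg_cancel_left] at h2
    refine Prod.ext (QuotientAddGroup.eq.2 ((hmem _).2 ⟨_, h⟩)) ?_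
    change s = t
    linarith
  have hsurj : Function.Surjective F := by
    have : Function.Surjective (F ∘ q) := by
      rw [hFq]; exact QuotientAddGroup.mk_surjective.comp Φ.surjective
    exact this.of_comp
  have hcont : Continuous F := by
    rw [(hqo.isQuotientMap hqc hqs).continuous_iff, hFq]
    exact QuotientAddGroup.continuous_mk.comp Φ.continuous
  have hopen : IsOpenMap F := by
    refine IsOpenMap.of_comp hqc hqs ?_
    rw [hFq]
    exact QuotientAddGroup.isOpenMap_coe.comp Φ.isOpenMap
  exact ⟨(Equiv.ofBijective F ⟨hinj, hsurj⟩).toHomeomorphOfContinuousOpen hcont hopen, hF⟩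

/-- In coordinates where every translation is a translation of the first factor together with a
fibrewise translation of the second, the product measure is translation invariant. -/
theorem map_prod_isAddLeftInvariant {X G : Type*} [AddGroup X] [TopologicalSpace X]
    [SecondCountableTopology X] [MeasurableSpace X] [BorelSpace X] [ContinuousAdd X]
    [AddGroup G] [TopologicalSpace G] [ContinuousAdd G] [MeasurableSpace G] [BorelSpace G]
    (Δ : X × ℝ ≃ₜ G)
    (hΔ : ∀ g : G, ∃ a : X, ∀ x : X, ∃ c : ℝ, ∀ t : ℝ, g + Δ (x, t) = Δ (a + x, c + t))
    (μ : Measure X) [SFinite μ] [μ.IsAddLeftInvariant] :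
    ((μ.prod (volume : Measure ℝ)).map Δ).IsAddLeftInvariant := by
  refine ⟨fun g => ?_⟩
  obtain ⟨a, ha⟩ := hΔ g
  -- The cocycle `c` is read off from the translate of the zero section, hence is continuous.
  let c : X → ℝ := fun x => (Δ.symm (g + Δ (x, 0))).2
  have hc : Continuous c := by fun_prop
  have hT : ∀ x t, g + Δ (x, t) = Δ (a + x, c x + t) := by
    intro x t
    obtain ⟨b, hb⟩ := ha x
    have : c x = b := by simp [c, hb]
    rw [this, hb]
  have hmp : MeasurePreserving (fun p : X × ℝ => (a + p.1, c p.1 + p.2))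
      (μ.prod volume) (μ.prod volume) :=
    (measurePreserving_add_left μ a).skew_product (g := fun x t => c x + t)
      (by
        have h1 := hc.measurable
        change Measurable fun p : X × ℝ => c p.1 + p.2
        fun_prop)
      (Filter.Eventually.of_forall fun x => (measurePreserving_add_left volume (c x)).map_eq)
  have hΔm : Measurable Δ := Δ.continuous.measurable
  have hg : Measurable (g + · : G → G) := (continuous_const_add g).measurable
  rw [Measure.map_map hg hΔm]
  have : (g + · : G → G) ∘ Δ = Δ ∘ fun p : X × ℝ => (a + p.1, c p.1 + p.2) :=
    funext fun p => hT p.1 p.2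
  rw [this, ← Measure.map_map hΔm hmp.measurable, hmp.map_eq]

/-- The product coordinates of the quotient `(ℝ^{d−1} × ℝ)/H` via the
boundary function `φ`: the map `Δ(η(y), t) = π(y, φ(y) + t)` is a well-defined
homeomorphism `(ℝ^{d−1}/H₀) × ℝ ≃ₜ (ℝ^{d−1} × ℝ)/H`; it sends `(ℝ^{d−1}/H₀) × [0,∞)`
onto `A = π(Ã)` and `(ℝ^{d−1}/H₀) × {0}` onto `∂A`; and it pushes `μ₁ ⊗ Lebesgue`
forward to a translation-invariant measure. -/
theorem quotient_coordinates_homeomorph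
    {d : ℕ}
    (H : AddSubgroup (EuclideanSpace ℝ (Fin (d - 1)) × ℝ))
    (hHclosed : IsClosed (H : Set (EuclideanSpace ℝ (Fin (d - 1)) × ℝ)))
    (φ : EuclideanSpace ℝ (Fin (d - 1)) → ℝ) (hφ : Continuous φ)
    (hequiv : ∀ y : EuclideanSpace ℝ (Fin (d - 1)), ∀ h ∈ H, φ (y + h.1) = φ y + h.2)
    (H₀ : AddSubgroup (EuclideanSpace ℝ (Fin (d - 1))))
    (hH₀ : (H₀ : Set (EuclideanSpace ℝ (Fin (d - 1)))) = {y | ∃ t : ℝ, (y, t) ∈ H})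
    [MeasurableSpace ((EuclideanSpace ℝ (Fin (d - 1)) × ℝ) ⧸ H)]
    [BorelSpace ((EuclideanSpace ℝ (Fin (d - 1)) × ℝ) ⧸ H)]
    [MeasurableSpace (EuclideanSpace ℝ (Fin (d - 1)) ⧸ H₀)]
    [BorelSpace (EuclideanSpace ℝ (Fin (d - 1)) ⧸ H₀)] :
    ∃ Δ : (EuclideanSpace ℝ (Fin (d - 1)) ⧸ H₀) × ℝ ≃ₜ
        ((EuclideanSpace ℝ (Fin (d - 1)) × ℝ) ⧸ H),
      (∀ (y : EuclideanSpace ℝ (Fin (d - 1))) (t : ℝ),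
        Δ (QuotientAddGroup.mk' H₀ y, t) = QuotientAddGroup.mk' H (y, φ y + t)) ∧
      (⇑Δ '' (Set.univ ×ˢ Set.Ici (0 : ℝ)) =
        ⇑(QuotientAddGroup.mk' H) '' {p : EuclideanSpace ℝ (Fin (d - 1)) × ℝ | φ p.1 ≤ p.2}) ∧
      (⇑Δ '' (Set.univ ×ˢ ({0} : Set ℝ)) =
        frontier (⇑(QuotientAddGroup.mk' H) ''
          {p : EuclideanSpace ℝ (Fin (d - 1)) × ℝ | φ p.1 ≤ p.2})) ∧
      (∀ μ₁ : Measure (EuclideanSpace ℝ (Fin (d - 1)) ⧸ H₀), μ₁.IsAddHaarMeasure →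
        ((μ₁.prod (volume : Measure ℝ)).map ⇑Δ).IsAddLeftInvariant) := by
  obtain ⟨Δ, hΔ⟩ := exists_shear_homeomorph H φ hφ hequiv H₀ hH₀
  have hA : ⇑Δ '' (Set.univ ×ˢ Set.Ici (0 : ℝ)) =
      ⇑(QuotientAddGroup.mk' H) '' {p : EuclideanSpace ℝ (Fin (d - 1)) × ℝ | φ p.1 ≤ p.2} := by
    ext z
    constructor
    · rintro ⟨⟨x, t⟩, ⟨-, ht⟩, rfl⟩
      obtain ⟨y, rfl⟩ := QuotientAddGroup.mk_surjective x
      exact ⟨(y, φ y + t), Set.mem_ofPred.2 (le_add_of_nonneg_right (Set.mem_Ici.1 ht)), (hΔ y t).symm⟩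
    · rintro ⟨⟨y, t⟩, ht, rfl⟩
      refine ⟨((y : EuclideanSpace ℝ (Fin (d - 1)) ⧸ H₀), t - φ y),
        ⟨trivial, Set.mem_Ici.2 (sub_nonneg.2 (Set.mem_ofPred.1 ht))⟩, ?_⟩
      rw [hΔ, add_sub_cancel]
      rfl
  refine ⟨Δ, hΔ, hA, ?_, fun μ₁ hμ₁ => ?_⟩
  · rw [← hA, ← Δ.image_frontier, frontier_univ_prod_eq, frontier_Ici]
  · refine map_prod_isAddLeftInvariant Δ (fun g => ?_) μ₁
    obtain ⟨⟨a, s⟩, rfl⟩ := QuotientAddGroup.mk_surjective g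
    refine ⟨a, fun x => ?_⟩
    obtain ⟨y, rfl⟩ := QuotientAddGroup.mk_surjective x
    refine ⟨s + φ y - φ (a + y), fun t => ?_⟩
    rw [hΔ, ← QuotientAddGroup.mk_add, ← QuotientAddGroup.mk_add, hΔ]
    congr 1
    ext
    · rfl
    · change s + (φ y + t) = φ (a + y) + (s + φ y - φ (a + y) + t)
      ring
end

section
/- Let P be a closed convex cone in ℝ^{d−1} × ℝ that is spanning and pointed, with (0,1) in the interior Ω of P. Let φ : ℝ^{d−1} → ℝ be a continuous function such that the set Ã = {(y,t) ∈ ℝ^{d−1} × ℝ : t ≥ φ(y)} satisfies Ã + Ω ⊆ Ã. Then for every a₁ ∈ ℝ^{d−1}, the function ℝ^{d−1} ∋ y ↦ φ(y + a₁) − φ(y) is bounded. -/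
/-!
Every horizontal vector `v` is the first component of some `(v, c) ∈ interior P`: since
`(0, 1)` is interior, so is `(s • v, 1)` for small `s > 0`, and the interior of a cone is stable
under scaling by `s⁻¹`. Translating the boundary point `(y, φ y)` by `(v, c)` gives
`φ (y + v) ≤ φ y + c` with `c` independent of `y`. The choices `v = a₁` and `v = -a₁` bound the
difference from above and from below.
-/

theorem exists_mk_mem_interior_of_cone {E : Type*} [NormedAddCommGroup E] [NormedSpace ℝ E]
    (P : Set (E × ℝ)) (hPcone : ∀ (c : ℝ), 0 ≤ c → ∀ x ∈ P, c • x ∈ P)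
    (h01 : ((0 : E), (1 : ℝ)) ∈ interior P) (v : E) :
    ∃ c : ℝ, (v, c) ∈ interior P := by
  have hcont : Continuous fun s : ℝ => (s • v, (1 : ℝ)) := by fun_prop
  have hev : ∀ᶠ s : ℝ in nhds 0, (s • v, (1 : ℝ)) ∈ interior P :=
    hcont.continuousAt.eventually_mem (isOpen_interior.mem_nhds (by simpa using h01))
  obtain ⟨s, hs, hs0⟩ :=
    ((hev.filter_mono nhdsWithin_le_nhds).and
      (self_mem_nhdsWithin : Set.Ioi (0 : ℝ) ∈ nhdsWithin 0 (Set.Ioi 0))).exists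
  have hs0 : 0 < s := hs0
  refine ⟨s⁻¹, ?_⟩
  -- The preimage of `interior P` under scaling by `s` is open and contained in the cone `P`.
  have hsub : (fun x : E × ℝ => s • x) ⁻¹' interior P ⊆ P := by
    intro x hx
    have h := hPcone s⁻¹ (inv_nonneg.2 hs0.le) _ (interior_subset hx)
    rwa [inv_smul_smul₀ hs0.ne'] at h
  refine interior_maximal hsub (isOpen_interior.preimage (continuous_const_smul s)) ?_
  simpa [hs0.ne'] using hs

/-- If `Ã = {(y,t) : t ≥ φ(y)}` is invariant under translation by the
interior `Ω` of a spanning pointed closed convex cone `P ⊆ ℝ^{d−1} × ℝ` with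
`(0,1) ∈ Ω`, then all difference functions `y ↦ φ(y + a₁) − φ(y)` are bounded. -/
theorem boundary_function_differences_bounded
    {d : ℕ}
    (P : Set (EuclideanSpace ℝ (Fin (d - 1)) × ℝ))
    (hPclosed : IsClosed P) (hPconvex : Convex ℝ P)
    (hPcone : ∀ (c : ℝ), 0 ≤ c → ∀ x ∈ P, c • x ∈ P)
    (hPspan : ∀ x : EuclideanSpace ℝ (Fin (d - 1)) × ℝ, ∃ a ∈ P, ∃ b ∈ P, x = a - b)
    (hPpointed : ∀ x ∈ P, -x ∈ P → x = 0)
    (h01 : ((0 : EuclideanSpace ℝ (Fin (d - 1))), (1 : ℝ)) ∈ interior P)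
    (φ : EuclideanSpace ℝ (Fin (d - 1)) → ℝ) (hφ : Continuous φ)
    (hAinv : ∀ p : EuclideanSpace ℝ (Fin (d - 1)) × ℝ, φ p.1 ≤ p.2 →
      ∀ ω ∈ interior P, φ (p.1 + ω.1) ≤ p.2 + ω.2)
    (a₁ : EuclideanSpace ℝ (Fin (d - 1))) :
    ∃ M : ℝ, ∀ y : EuclideanSpace ℝ (Fin (d - 1)), |φ (y + a₁) - φ y| ≤ M := by
  obtain ⟨c, hc⟩ := exists_mk_mem_interior_of_cone P hPcone h01 a₁
  obtain ⟨c', hc'⟩ := exists_mk_mem_interior_of_cone P hPcone h01 (-a₁)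
  refine ⟨max c c', fun y => ?_⟩
  have h1 : φ (y + a₁) ≤ φ y + c := hAinv (y, φ y) le_rfl _ hc
  have h2 : φ (y + a₁ + -a₁) ≤ φ (y + a₁) + c' := hAinv (y + a₁, φ (y + a₁)) le_rfl _ hc'
  rw [add_neg_cancel_right] at h2
  exact abs_le.2 ⟨by linarith [le_max_right c c'], by linarith [le_max_left c c']⟩
end

section
/- Let d ≥ 2, let P be a closed convex cone in ℝ^d that is spanning and pointed with interior Ω, let H be a closed subgroup of ℝ^d whose linear span L(H) has dimension at most d − 2 (codimension at least two), and let A ⊆ ℝ^d/H be an Ω-space with Haar measure μ on ℝ^d/H. Let u ∈ Z¹(Ω, L_A). Then there exists a Borel function f : A → ℂ such that for every a ∈ Ω, u_a(x) = f(x + a) − f(x) for μ-almost every x ∈ A (i.e., the homomorphism part of u vanishes). -/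
open MeasureTheory Filter

/-!
Let `S` be the image of `Ω` in `G = ℝ^d/H`, an open subsemigroup, and let `c ∈ Ω`.

If `a, a' ∈ Ω` agree modulo `H`, comparing `u_{a+b}` with `u_{b+a}`, and likewise for `a'`, shows
that `u_a - u_{a'}` is invariant under every translation by `b ∈ Ω`, hence is a.e. constant on `A`
(`exists_ae_eq_const_of_invariant`). The constant is square integrable on the shell `A ∖ (A + c)`,
whose measure is infinite because `L(H)` has codimension at least two (`measure_diff_eq_top`), so it
vanishes. This is the only place where the codimension enters, and it is what kills the
homomorphism part: `u` descends to a cocycle indexed by `S`.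

The shells `A ∖ (A + n c)` exhaust `A`, and on each of them `u` is a weakly measurable family in a
separable `L²` space, so it has a jointly measurable version (`exists_measurable_uncurry_of_iUnion`).
Measurability in the variable of `S` rather than of `Ω` comes from the Lusin–Souslin theorem.

For a jointly measurable cocycle, Fubini allows the cocycle to be evaluated at a generic base point,
and a primitive is written down explicitly (`exists_primitive`).
-/

/-! ### Jointly measurable versions -/

/-- A weakly measurable family in `L²` has a jointly measurable version. Since `L²` is separable, `v` is
approximated within `4⁻ᵏ`, uniformly in `y`, by families taking values in a countable dense set;
these are jointly measurable, and the geometric rate gives pointwise a.e. convergence for every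
`y`. -/
theorem exists_measurable_uncurry {Y X : Type*} [MeasurableSpace Y] [MeasurableSpace X]
    [MeasurableSpace.CountablyGenerated X] (m : Measure X) [SFinite m]
    (v : Y → Lp ℂ 2 m)
    (hv : ∀ ξ : Lp ℂ 2 m, Measurable fun y => inner ℂ ξ (v y)) :
    ∃ U : Y → X → ℂ, Measurable (Function.uncurry U) ∧ ∀ y, U y =ᵐ[m] v y := by
  classical
  have : Fact ((2 : ENNReal) ≠ ⊤) := ⟨by simp⟩
  let D : ℕ → Lp ℂ 2 m := TopologicalSpace.denseSeq _
  have hD : DenseRange D := TopologicalSpace.denseRange_denseSeq _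
  have hex : ∀ (k : ℕ) (y : Y), ∃ i, ‖D i - v y‖ ≤ (1 / 4 : ℝ) ^ k := by
    intro k y
    obtain ⟨i, hi⟩ := hD.exists_dist_lt (v y) (ε := (1 / 4 : ℝ) ^ k) (by positivity)
    exact ⟨i, by rw [← dist_eq_norm, dist_comm]; exact hi.le⟩
  -- A norm bound is a countable conjunction of bounds on inner products.
  have hball : ∀ (w : Lp ℂ 2 m) (r : ℝ), 0 ≤ r →
      (‖w‖ ≤ r ↔ ∀ j, ‖inner ℂ (D j) w‖ ≤ r * ‖D j‖) := by
    intro w r hr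
    constructor
    · intro h j
      calc _ ≤ ‖D j‖ * ‖w‖ := norm_inner_le_norm _ _
        _ ≤ ‖D j‖ * r := by gcongr
        _ = _ := mul_comm _ _
    · intro h
      have h2 : ∀ z : Lp ℂ 2 m, ‖inner ℂ z w‖ ≤ r * ‖z‖ := fun z =>
        hD.induction_on (p := fun z => ‖inner ℂ z w‖ ≤ r * ‖z‖) z
          (isClosed_le (by fun_prop) (by fun_prop)) h
      have h3 := h2 w
      rw [inner_self_eq_norm_sq_to_K] at h3
      simp only [Complex.coe_algebraMap, norm_pow, Complex.norm_real, norm_norm] at h3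
      by_contra hlt
      push Not at hlt
      nlinarith [norm_nonneg w]
  have hmeas : ∀ k i, MeasurableSet {y | ‖D i - v y‖ ≤ (1 / 4 : ℝ) ^ k} := by
    intro k i
    have : {y | ‖D i - v y‖ ≤ (1 / 4 : ℝ) ^ k}
        = ⋂ j, {y | ‖inner ℂ (D j) (D i - v y)‖ ≤ (1 / 4 : ℝ) ^ k * ‖D j‖} := by
      ext y
      simp only [Set.mem_ofPred_eq, Set.mem_iInter]
      exact hball _ _ (by positivity)
    rw [this]
    refine MeasurableSet.iInter fun j => ?_
    simp_rw [inner_sub_right]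
    exact measurableSet_le ((measurable_const.sub (hv _)).norm) measurable_const
  let N : ℕ → Y → ℕ := fun k y => Nat.find (hex k y)
  have hN : ∀ k, Measurable (N k) := fun k => measurable_find (hex k) (hmeas k)
  have hNs : ∀ k y, ‖D (N k y) - v y‖ ≤ (1 / 4 : ℝ) ^ k := fun k y => Nat.find_spec (hex k y)
  let R : ℕ × X → ℂ := fun p => D p.1 p.2
  have hR : Measurable R := measurable_from_prod_countable_right fun i =>
    (Lp.stronglyMeasurable (D i)).measurable
  let W : ℕ → Y × X → ℂ := fun k p => R (N k p.1, p.2)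
  have hW : ∀ k, Measurable (W k) := fun k =>
    hR.comp (((hN k).comp measurable_fst).prodMk measurable_snd)
  refine ⟨fun y x => Filter.atTop.limUnder fun k => W k (y, x), ?_, fun y => ?_⟩
  · exact (StronglyMeasurable.limUnder fun k => (hW k).stronglyMeasurable).measurable
  · let g : ℕ → Lp ℂ 2 m := fun k => D (N k y)
    have hg : Filter.Tendsto g Filter.atTop (nhds (v y)) := by
      rw [tendsto_iff_norm_sub_tendsto_zero]
      exact squeeze_zero (fun _ => norm_nonneg _) (fun k => hNs k y)
        (tendsto_pow_atTop_nhds_zero_of_lt_one (by norm_num) (by norm_num))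
    obtain ⟨ns, hns, hae⟩ := (tendstoInMeasure_of_tendsto_Lp hg).exists_seq_tendsto_ae
    have hcau : ∀ᵐ x ∂m, ∃ l : ℂ, Filter.Tendsto (fun n => g n x) Filter.atTop (nhds l) := by
      refine Lp.ae_tendsto_of_cauchy_eLpNorm (p := 2)
        (B := fun k => ENNReal.ofReal (3 * (1 / 4 : ℝ) ^ k))
        (fun n => (Lp.aestronglyMeasurable _)) (by norm_num) ?_ ?_
      · exact ((summable_geometric_of_lt_one (by norm_num)
          (by norm_num : (1 / 4 : ℝ) < 1)).mul_left 3).tsum_ofReal_ne_top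
      · intro K n l hn hl
        have h1 : ‖g n - g l‖ ≤ 2 * (1 / 4 : ℝ) ^ K := by
          have e : g n - g l = (g n - v y) - (g l - v y) := by abel
          have hp : ∀ i, K ≤ i → (1 / 4 : ℝ) ^ i ≤ (1 / 4 : ℝ) ^ K := fun i hi =>
            pow_le_pow_of_le_one (by norm_num) (by norm_num) hi
          rw [e]
          linarith [norm_sub_le (g n - v y) (g l - v y), hNs n y, hNs l y, hp n hn, hp l hl]
        rw [← eLpNorm_congr_ae (Lp.coeFn_sub (g n) (g l)), ← Lp.enorm_def, ← ofReal_norm]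
        refine (ENNReal.ofReal_lt_ofReal_iff (by positivity)).2 (h1.trans_lt ?_)
        have : (0 : ℝ) < (1 / 4 : ℝ) ^ K := by positivity
        linarith
    filter_upwards [hae, hcau] with x h1 ⟨l, h2⟩
    have : l = v y x := tendsto_nhds_unique (h2.comp hns.tendsto_atTop) h1
    subst this
    exact h2.limUnder_eq

/-- Localised form of `exists_measurable_uncurry`: it is enough that the family is weakly measurable
in `L²` of each piece of a countable cover of `A`. -/
theorem exists_measurable_uncurry_of_iUnion {Y X : Type*} [MeasurableSpace Y] [MeasurableSpace X]
    [MeasurableSpace.CountablyGenerated X] (μ : Measure X) [SFinite μ]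
    (A : Set X) (B : ℕ → Set X) (hB : ∀ n, MeasurableSet (B n)) (hBA : A ⊆ ⋃ n, B n)
    (v : Y → X → ℂ) (hL : ∀ y n, MemLp (v y) 2 (μ.restrict (B n)))
    (hv : ∀ n (ξ : X → ℂ), Measurable ξ → MemLp ξ 2 μ →
      Measurable fun y => ∫ x in B n, v y x * (starRingEnd ℂ) (ξ x) ∂μ) :
    ∃ U : Y → X → ℂ, Measurable (Function.uncurry U) ∧
      ∀ y, ∀ᵐ x ∂μ, x ∈ A → U y x = v y x := by
  classical
  have h1 : ∀ n, ∃ U : Y → X → ℂ, Measurable (Function.uncurry U) ∧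
      ∀ y, U y =ᵐ[μ.restrict (B n)] v y := by
    intro n
    obtain ⟨U, hU, hUv⟩ := exists_measurable_uncurry (μ.restrict (B n))
      (fun y => (hL y n).toLp (v y)) (fun ξ => by
        have hξ : MemLp ((B n).indicator ξ) 2 μ :=
          (memLp_indicator_iff_restrict (hB n)).2 (Lp.memLp ξ)
        convert hv n ((B n).indicator ξ)
          ((Lp.stronglyMeasurable ξ).measurable.indicator (hB n)) hξ using 2 with y
        rw [L2.inner_def]
        refine integral_congr_ae ?_
        filter_upwards [(hL y n).coeFn_toLp, ae_restrict_mem (hB n)] with x hx hxB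
        rw [hx, Set.indicator_of_mem hxB]
        simp)
    exact ⟨U, hU, fun y => (hUv y).trans (hL y n).coeFn_toLp⟩
  choose U hU hUv using h1
  -- `t` picks the first piece containing a given point of `A`.
  let p : X → ℕ → Prop := fun x n => x ∈ B n ∨ x ∉ ⋃ n, B n
  have hp : ∀ x, ∃ n, p x n := by
    intro x
    by_cases h : x ∈ ⋃ n, B n
    · exact (Set.mem_iUnion.1 h).imp fun _ => Or.inl
    · exact ⟨0, Or.inr h⟩
  let t : X → ℕ := fun x => Nat.find (hp x)
  have ht : Measurable t := measurable_find hp fun n =>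
    (hB n).union (MeasurableSet.iUnion hB).compl
  let R : ℕ × (Y × X) → ℂ := fun q => U q.1 q.2.1 q.2.2
  have hR : Measurable R := measurable_from_prod_countable_right fun n => hU n
  refine ⟨fun y x => U (t x) y x, ?_, fun y => ?_⟩
  · exact hR.comp ((ht.comp measurable_snd).prodMk measurable_id)
  · have : ∀ᵐ x ∂μ, ∀ n, x ∈ B n → U n y x = v y x :=
      ae_all_iff.2 fun n => (ae_restrict_iff' (hB n)).1 (hUv n y)
    filter_upwards [this] with x hx hxA
    refine hx _ ?_
    exact (Nat.find_spec (hp x)).resolve_right (fun h => h (hBA hxA))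

/-! ### Cocycles on semigroups of translations -/

theorem measurableSet_forall_ae {Z X : Type*} [MeasurableSpace Z] [MeasurableSpace X]
    (μ : Measure X) [SFinite μ] {p : Z → X → Prop}
    (hp : MeasurableSet {z : Z × X | p z.1 z.2}) : MeasurableSet {z | ∀ᵐ x ∂μ, p z x} :=
  measurable_measure_prodMk_left hp.compl (measurableSet_singleton 0)

section Group

variable {G : Type*} [AddCommGroup G] [MeasurableSpace G] [MeasurableAdd₂ G] [MeasurableNeg G]
  {μ : Measure G} [SFinite μ] [μ.IsAddLeftInvariant]

/-- The change of variables `a = q + e - x` in an a.e. statement about `(a, x)`. -/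
theorem ae_ae_sub_left {p : G → G → Prop} (hp : MeasurableSet {z : G × G | p z.1 z.2})
    (h : ∀ᵐ a ∂μ, ∀ᵐ x ∂μ, p a x) (e : G) : ∀ᵐ q ∂μ, ∀ᵐ x ∂μ, p (q + e - x) x := by
  have hm : Measurable fun z : G × G => (z.1 + e - z.2, z.2) :=
    ((measurable_fst.add_const e).sub measurable_snd).prodMk measurable_snd
  refine (Measure.ae_ae_comm (p := fun q x => p (q + e - x) x) (hm hp)).2 ?_
  filter_upwards [(Measure.ae_ae_comm hp).1 h] with x hx
  filter_upwards [(eventually_add_right_iff μ (e - x)).2 hx] with q hq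
  rwa [add_sub_assoc]

/-- Ergodicity of the translation action of `S` on `A`. By Fubini, for almost every `q` the value `D x`
agrees with `D (q + n • c)` for a.e. `x ∈ A` with `q + n • c ∈ x + S`, which holds once `n` is large,
and `D (q + n • c)` is eventually constant in `n`. -/
theorem exists_ae_eq_const_of_invariant [NeZero μ] {S A : Set G} (hS : MeasurableSet S)
    (hA : MeasurableSet A) (hAne : A.Nonempty) (hAS : ∀ x ∈ A, ∀ s ∈ S, x + s ∈ A)
    {c : G} (hc : c ∈ S) (hev : ∀ x, ∀ᶠ n : ℕ in atTop, n • c - x ∈ S)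
    {D : G → ℂ} (hD : Measurable D)
    (hinv : ∀ s ∈ S, ∀ᵐ x ∂μ, x ∈ A → D (x + s) = D x) :
    ∃ k, ∀ᵐ x ∂μ, x ∈ A → D x = k := by
  have hp : MeasurableSet {z : G × G | z.1 ∈ S → z.2 ∈ A → D (z.2 + z.1) = D z.2} :=
    ((hS.mem.comp measurable_fst).imp ((hA.mem.comp measurable_snd).imp
      (measurableSet_eq_fun (hD.comp (measurable_snd.add measurable_fst))
        (hD.comp measurable_snd)).mem)).setOf
  have h1 : ∀ᵐ q ∂μ, ∀ n : ℕ, ∀ᵐ x ∂μ,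
      q + n • c - x ∈ S → x ∈ A → D (x + (q + n • c - x)) = D x := by
    refine ae_all_iff.2 fun n => ae_ae_sub_left (p := fun s x => s ∈ S → x ∈ A → D (x + s) = D x)
      hp (ae_of_all _ fun s => ?_) _
    by_cases hs : s ∈ S
    · filter_upwards [hinv s hs] with x hx _ using hx
    · exact ae_of_all _ fun x h => absurd h hs
  have h2 : ∀ᵐ q ∂μ, ∀ n : ℕ, q + n • c ∈ A → D (q + n • c + c) = D (q + n • c) :=
    ae_all_iff.2 fun n => (eventually_add_right_iff μ (n • c)
      (p := fun x => x ∈ A → D (x + c) = D x)).2 (hinv c hc)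
  obtain ⟨q, hq1, hq2⟩ := (h1.and h2).exists
  obtain ⟨x₀, hx₀⟩ := hAne
  obtain ⟨n₀, hn₀⟩ := eventually_atTop.1 (hev (x₀ - q))
  have hin : ∀ n ≥ n₀, q + n • c ∈ A := fun n hn => by
    have := hAS x₀ hx₀ _ (hn₀ n hn)
    convert this using 1
    abel
  have hconst : ∀ n ≥ n₀, D (q + n • c) = D (q + n₀ • c) := by
    intro n hn
    induction n, hn using Nat.le_induction with
    | base => rfl
    | succ n hn ih => rw [← ih, ← hq2 n (hin n hn), succ_nsmul, add_assoc]
  refine ⟨D (q + n₀ • c), ?_⟩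
  filter_upwards [ae_all_iff.2 hq1] with x hx hxA
  obtain ⟨n, hn1, hn2⟩ := ((hev (x - q)).and (eventually_ge_atTop n₀)).exists
  have e : q + n • c - x = n • c - (x - q) := by abel
  have := hx n (by rwa [e]) hxA
  rw [add_sub_cancel] at this
  rw [← this, hconst n hn2]

/-- A jointly measurable cocycle on an open semigroup `S` with a cofinal sequence `n • c` is a
coboundary. A generic base point `q` is pushed to infinity along `c`: formally `U (q + n • c - x) x`
is `f (q + n • c) - f x`, and `f (q + n • c) - f q` is the telescoping sum of the `U c (q + k • c)`,
so their difference recovers `f` up to a constant. -/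
theorem exists_primitive {S A : Set G} (hS : MeasurableSet S) (hμS : μ S ≠ 0)
    (hSS : ∀ s ∈ S, ∀ t ∈ S, s + t ∈ S) (hA : MeasurableSet A)
    {c : G} (hc : c ∈ S) (hev : ∀ x, ∀ᶠ n : ℕ in atTop, n • c - x ∈ S)
    (hAS : ∀ x ∈ A, ∀ s ∈ S, x + s ∈ A)
    {U : G → G → ℂ} (hU : Measurable (Function.uncurry U))
    (hcoc : ∀ a ∈ S, ∀ b ∈ S, ∀ᵐ x ∂μ, x ∈ A → U (a + b) x = U a x + U b (x + a)) :
    ∃ f : G → ℂ, Measurable f ∧ ∀ a ∈ S, ∀ᵐ x ∂μ, x ∈ A → U a x = f (x + a) - f x := by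
  have hU' : ∀ {Z : Type _} [MeasurableSpace Z] {i j : Z → G}, Measurable i → Measurable j →
      Measurable fun z => U (i z) (j z) := fun hi hj => hU.comp (hi.prodMk hj)
  have h1 : ∀ᵐ q ∂μ, ∀ n : ℕ, ∀ᵐ x ∂μ, q + n • c - x ∈ S → x ∈ A →
      U (q + n • c - x + c) x = U (q + n • c - x) x + U c (x + (q + n • c - x)) := by
    refine ae_all_iff.2 fun n => ae_ae_sub_left
      (p := fun a x => a ∈ S → x ∈ A → U (a + c) x = U a x + U c (x + a)) ?_
      (ae_of_all _ fun a => ?_) _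
    · exact ((hS.mem.comp measurable_fst).imp ((hA.mem.comp measurable_snd).imp
        (measurableSet_eq_fun (hU' (by fun_prop) (by fun_prop))
          ((hU' (by fun_prop) (by fun_prop)).add (hU' (by fun_prop) (by fun_prop)))).mem)).setOf
    · by_cases ha : a ∈ S
      · filter_upwards [hcoc a ha c hc] with x hx _ using hx
      · exact ae_of_all _ fun x h => absurd h ha
  have h2 : ∀ᵐ q ∂μ, ∀ n : ℕ, ∀ᵐ b ∂μ, ∀ᵐ x ∂μ, b ∈ S → q + (n • c - b) - x ∈ S → x ∈ A →
      U (b + (q + (n • c - b) - x)) x = U b x + U (q + (n • c - b) - x) (x + b) := by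
    refine ae_all_iff.2 fun n => ?_
    refine (Measure.ae_ae_comm (p := fun b q => ∀ᵐ x ∂μ, b ∈ S → q + (n • c - b) - x ∈ S → x ∈ A →
      U (b + (q + (n • c - b) - x)) x = U b x + U (q + (n • c - b) - x) (x + b)) ?_).1
      (ae_of_all _ fun b => ?_)
    · refine measurableSet_forall_ae (Z := G × G) μ
        (p := fun z x => z.1 ∈ S → z.2 + (n • c - z.1) - x ∈ S → x ∈ A →
      U (z.1 + (z.2 + (n • c - z.1) - x)) x = U z.1 x + U (z.2 + (n • c - z.1) - x) (x + z.1)) ?_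
      exact ((hS.mem.comp (by fun_prop : Measurable fun w : (G × G) × G => w.1.1)).imp
        ((hS.mem.comp
          (by fun_prop : Measurable fun w : (G × G) × G => w.1.2 + (n • c - w.1.1) - w.2)).imp
        ((hA.mem.comp measurable_snd).imp
        (measurableSet_eq_fun (hU' (by fun_prop) (by fun_prop))
          ((hU' (by fun_prop) (by fun_prop)).add
            (hU' (by fun_prop) (by fun_prop)))).mem))).setOf
    · by_cases hb : b ∈ S
      · refine ae_ae_sub_left
          (p := fun a x => b ∈ S → a ∈ S → x ∈ A → U (b + a) x = U b x + U a (x + b)) ?_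
          (ae_of_all _ fun a => ?_) _
        · exact (measurable_const.imp ((hS.mem.comp measurable_fst).imp
            ((hA.mem.comp measurable_snd).imp
            (measurableSet_eq_fun (hU' (by fun_prop) (by fun_prop))
              ((hU' (by fun_prop) (by fun_prop)).add
                (hU' (by fun_prop) (by fun_prop)))).mem))).setOf
        · by_cases ha : a ∈ S
          · filter_upwards [hcoc b hb a ha] with x hx _ _ using hx
          · exact ae_of_all _ fun x _ h => absurd h ha
      · exact ae_of_all _ fun q => ae_of_all _ fun x h => absurd h hb
  have : NeZero μ := ⟨fun h => hμS (by simp [h])⟩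
  obtain ⟨q, hq1, hq2⟩ := (h1.and h2).exists
  -- `g n` is the candidate primitive, normalised at `q` and read off from the base point `q + n • c`.
  let g : ℕ → G → ℂ := fun n x =>
    (∑ k ∈ Finset.range n, U c (q + k • c)) - U (q + n • c - x) x
  have hg : ∀ n, Measurable (g n) := fun n =>
    measurable_const.sub (hU' (by fun_prop) (by fun_prop))
  let f : G → ℂ := fun x => atTop.limUnder fun n => g n x
  have hf : Measurable f :=
    (StronglyMeasurable.limUnder fun n => (hg n).stronglyMeasurable).measurable
  have hst : ∀ᵐ x ∂μ, x ∈ A → ∀ᶠ n in atTop, g n x = f x := by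
    filter_upwards [ae_all_iff.2 hq1] with x hx hxA
    obtain ⟨n₀, hn₀⟩ := eventually_atTop.1 (hev (x - q))
    have hconst : ∀ n ≥ n₀, g n x = g n₀ x := by
      intro n hn
      induction n, hn using Nat.le_induction with
      | base => rfl
      | succ n hn ih =>
        have e : q + n • c - x = n • c - (x - q) := by abel
        have h := hx n (by rw [e]; exact hn₀ n hn) hxA
        rw [← ih]
        simp only [g]
        have e2 : q + (n + 1) • c - x = q + n • c - x + c := by rw [succ_nsmul]; abel
        rw [e2, h, Finset.sum_range_succ, add_sub_cancel]
        ring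
    have hl : f x = g n₀ x := Tendsto.limUnder_eq <| tendsto_const_nhds.congr' <| by
      filter_upwards [eventually_ge_atTop n₀] with n hn using (hconst n hn).symm
    filter_upwards [eventually_ge_atTop n₀] with n hn
    rw [hl, hconst n hn]
  have hgood : ∀ᵐ b ∂μ, b ∈ S → ∀ᵐ x ∂μ, x ∈ A → U b x = f (x + b) - f x := by
    filter_upwards [ae_all_iff.2 hq2] with b hb hbS
    filter_upwards [ae_all_iff.2 hb, hst, (eventually_add_right_iff μ b).2 hst]
      with x hx hsx hsxb hxA
    obtain ⟨n, hn, hn1, hn2⟩ := ((hev (x + b - q)).and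
      ((hsx hxA).and (hsxb (hAS x hxA b hbS)))).exists
    have e : q + (n • c - b) - x = n • c - (x + b - q) := by abel
    have h := hx n hbS (by rwa [e]) hxA
    rw [← hn1, ← hn2]
    simp only [g]
    have e1 : b + (q + (n • c - b) - x) = q + n • c - x := by abel
    have e2 : q + (n • c - b) - x = q + n • c - (x + b) := by abel
    rw [e1, e2] at h
    rw [h]
    ring
  refine ⟨f, hf, fun a ha => ?_⟩
  -- From a.e. `b` to every `a`: write `a` as the difference of two generic elements `b + a` and `b`.
  have hgood' := (eventually_add_right_iff μ a).2 hgood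
  obtain ⟨b, hbS, hb, hab⟩ : ∃ b ∈ S,
      (∀ᵐ x ∂μ, x ∈ A → U b x = f (x + b) - f x) ∧
      (∀ᵐ x ∂μ, x ∈ A → U (b + a) x = f (x + (b + a)) - f x) := by
    by_contra hcon
    refine hμS (measure_mono_null (fun b hb => ?_) (ae_iff.1 (hgood.and hgood')))
    exact fun ⟨h, h'⟩ => hcon ⟨b, hb, h hb, h' (hSS b hb a ha)⟩
  filter_upwards [hcoc a ha b hbS, (eventually_add_right_iff μ a).2 hb, hab] with x hx hxb hxab hxA
  have h3 := hx hxA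
  rw [add_comm a b, hxab hxA, hxb (hAS x hxA a ha), add_comm b a, ← add_assoc] at h3
  linear_combination -h3

end Group

/-! ### Measure of the shells `A ∖ (A + b)` -/

theorem memLp_two_iff_lintegral {X : Type*} [MeasurableSpace X] {m : Measure X} {f : X → ℂ}
    (hf : Measurable f) : MemLp f 2 m ↔ ∫⁻ x, (‖f x‖₊ : ENNReal) ^ 2 ∂m < ⊤ := by
  rw [MemLp, and_iff_right hf.aestronglyMeasurable,
    eLpNorm_lt_top_iff_lintegral_rpow_enorm_lt_top (by norm_num) (by norm_num)]
  simp [enorm_eq_nnnorm]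

section Cone

variable {E : Type*} [NormedAddCommGroup E] [NormedSpace ℝ E] {Ω : Set E}

theorem eventually_smul_sub_mem (ho : IsOpen Ω) (hsmul : ∀ t : ℝ, 0 < t → ∀ x ∈ Ω, t • x ∈ Ω)
    {c : E} (hc : c ∈ Ω) (x : E) : ∀ᶠ t : ℝ in atTop, t • c - x ∈ Ω := by
  have h : Tendsto (fun t : ℝ => c - t⁻¹ • x) atTop (nhds c) := by
    simpa using (tendsto_const_nhds (x := c)).sub
      ((tendsto_inv_atTop_zero (𝕜 := ℝ)).smul_const x)
  filter_upwards [h.eventually (ho.mem_nhds hc), eventually_gt_atTop 0] with t ht ht0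
  convert hsmul t ht0 _ ht using 1
  rw [smul_sub, smul_inv_smul₀ ht0.ne']

theorem exists_pos_sub_smul_mem (ho : IsOpen Ω) {w : E} (hw : w ∈ Ω) (b : E) :
    ∃ ε : ℝ, 0 < ε ∧ w - ε • b ∈ Ω := by
  have h : Tendsto (fun t : ℝ => w - t • b) (nhdsWithin 0 (Set.Ioi 0)) (nhds w) := by
    have : Continuous fun t : ℝ => w - t • b := by fun_prop
    simpa using (this.tendsto 0).mono_left nhdsWithin_le_nhds
  obtain ⟨ε, h1, h2⟩ := ((h.eventually (ho.mem_nhds hw)).and self_mem_nhdsWithin).exists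
  exact ⟨ε, h2, h1⟩

/-- Every line in a direction `b ∈ Ω` crosses the boundary of `A`: at the crossing point, translation
by `Ω` enters `A` and translation by `-Ω` leaves it. -/
theorem exists_boundary_point (ho : IsOpen Ω)
    (hadd : ∀ x ∈ Ω, ∀ y ∈ Ω, x + y ∈ Ω) (hsmul : ∀ t : ℝ, 0 < t → ∀ x ∈ Ω, t • x ∈ Ω)
    {A : Set E} (hne : A.Nonempty) (hproper : A ≠ Set.univ)
    (hinv : ∀ x ∈ A, ∀ a ∈ Ω, x + a ∈ A) {b : E} (hb : b ∈ Ω) (y : E) :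
    ∃ t : ℝ, ∀ w ∈ Ω, y + t • b + w ∈ A ∧ y + t • b - w ∉ A := by
  obtain ⟨x₀, hx₀⟩ := hne
  obtain ⟨z, hz⟩ := (Set.ne_univ_iff_exists_notMem A).1 hproper
  let T : Set ℝ := {t | y + t • b ∈ A}
  have hT : T.Nonempty := by
    obtain ⟨t, ht⟩ := (eventually_smul_sub_mem ho hsmul hb (x₀ - y)).exists
    refine ⟨t, ?_⟩
    have := hinv x₀ hx₀ _ ht
    change y + t • b ∈ A
    convert this using 1
    abel
  have hbdd : BddBelow T := by
    obtain ⟨N, hN⟩ := eventually_atTop.1 (eventually_smul_sub_mem ho hsmul hb (y - z))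
    refine ⟨-N, fun t ht => ?_⟩
    by_contra hlt
    push Not at hlt
    have := hinv _ ht _ (hN (-t) (by linarith))
    refine hz ?_
    convert this using 1
    rw [neg_smul]
    abel
  refine ⟨sInf T, fun w hw => ⟨?_, fun hmem => ?_⟩⟩
  · obtain ⟨ε, hε, hwε⟩ := exists_pos_sub_smul_mem ho hw b
    obtain ⟨t, ht, htlt⟩ := exists_lt_of_csInf_lt hT (lt_add_of_pos_right (sInf T) hε)
    have := hinv _ ht _ (hadd _ hwε _ (hsmul (sInf T + ε - t) (by linarith) b hb))
    convert this using 1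
    module
  · obtain ⟨ε, hε, hwε⟩ := exists_pos_sub_smul_mem ho hw b
    have h1 := hinv _ hmem _ hwε
    have h2 : sInf T - ε ∈ T := by
      change y + (sInf T - ε) • b ∈ A
      convert h1 using 1
      module
    linarith [csInf_le hbdd h2]

/-- In codimension at least two every shell `A ∖ (A + b)` has infinite measure. Take a functional `φ`
vanishing on `H` and on `b`, and `w` with `φ w = 1`. The line through `n • w` in direction `b` crosses
the boundary of `A` at a point `x n` with `φ (x n) = n`, and the shell contains the translate by `x n`
of the fixed open set `D = Ω ∩ (b - Ω) ∩ {|φ| < 1/2}`. These translates are disjoint, also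
modulo `H`. -/
theorem measure_diff_eq_top [FiniteDimensional ℝ E] (ho : IsOpen Ω)
    (hadd : ∀ x ∈ Ω, ∀ y ∈ Ω, x + y ∈ Ω) (hsmul : ∀ t : ℝ, 0 < t → ∀ x ∈ Ω, t • x ∈ Ω)
    (H : AddSubgroup E)
    (hcodim : Module.finrank ℝ (Submodule.span ℝ (H : Set E)) + 1 < Module.finrank ℝ E)
    [MeasurableSpace (E ⧸ H)] [BorelSpace (E ⧸ H)]
    (μ : Measure (E ⧸ H)) [μ.IsAddHaarMeasure]
    {A : Set (E ⧸ H)} (hne : A.Nonempty) (hproper : A ≠ Set.univ)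
    (hinv : ∀ x ∈ A, ∀ a ∈ Ω, x + QuotientAddGroup.mk' H a ∈ A) {b : E} (hb : b ∈ Ω) :
    μ (A \ ((fun x => x + QuotientAddGroup.mk' H b) '' A)) = ⊤ := by
  set π := QuotientAddGroup.mk' H with hπ
  have hπo : IsOpenMap π := QuotientAddGroup.isOpenMap_coe
  have hπs : Function.Surjective π := QuotientAddGroup.mk'_surjective H
  -- A functional that vanishes on `H` and on `b`; it descends to the quotient.
  obtain ⟨φ, hφ0, hφ⟩ := Submodule.exists_le_ker_of_lt_top
    (Submodule.span ℝ (H : Set E) ⊔ Submodule.span ℝ {b}) (by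
      refine lt_top_iff_ne_top.2 fun htop => ?_
      have h1 := Submodule.finrank_add_le_finrank_add_finrank
        (Submodule.span ℝ (H : Set E)) (Submodule.span ℝ {b})
      have h2 : Module.finrank ℝ (Submodule.span ℝ {b}) ≤ 1 := by
        simpa using finrank_span_le_card (R := ℝ) ({b} : Set E)
      rw [htop, finrank_top] at h1
      omega)
  have hφH : ∀ h ∈ H, φ h = 0 := fun h hh =>
    hφ (Submodule.mem_sup_left (Submodule.subset_span hh))
  have hφb : φ b = 0 := hφ (Submodule.mem_sup_right (Submodule.mem_span_singleton_self b))
  have hφc : Continuous φ := φ.continuous_of_finiteDimensional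
  obtain ⟨w, hw⟩ : ∃ w, φ w = 1 := LinearMap.surjective hφ0 1
  let D : Set E := {x | x ∈ Ω ∧ b - x ∈ Ω ∧ |φ x| < 1 / 2}
  have hDo : IsOpen D := by
    refine ho.inter ((ho.preimage (by fun_prop : Continuous fun x => b - x)).inter ?_)
    exact isOpen_lt hφc.abs continuous_const
  have hDne : D.Nonempty := by
    refine ⟨(1 / 2 : ℝ) • b, hsmul _ (by norm_num) b hb, ?_, ?_⟩
    · convert hsmul (1 / 2) (by norm_num) b hb using 1
      module
    · simp [hφb]
  have hbd : ∀ n : ℕ, ∃ t : ℝ, ∀ v ∈ Ω,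
      π ((n : ℝ) • w + t • b + v) ∈ A ∧ π ((n : ℝ) • w + t • b - v) ∉ A := fun n => by
    refine exists_boundary_point (A := π ⁻¹' A) ho hadd hsmul (hne.preimage hπs) ?_ ?_ hb _
    · intro h
      refine hproper (Set.eq_univ_of_forall fun z => ?_)
      obtain ⟨e, rfl⟩ := hπs z
      exact Set.eq_univ_iff_forall.1 h e
    · intro x hx a ha
      simpa using hinv _ hx a ha
  choose t ht using hbd
  let x : ℕ → E := fun n => (n : ℝ) • w + t n • b
  have hφx : ∀ n, φ (x n) = n := fun n => by simp [x, hw, hφb]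
  let B : ℕ → Set (E ⧸ H) := fun n => (fun z => π (x n) + z) '' (π '' D)
  have hBo : ∀ n, IsOpen (B n) := fun n => isOpenMap_add_left _ _ (hπo _ hDo)
  have hBμ : ∀ n, μ (B n) = μ (π '' D) := fun n => by
    simp only [B, Set.image_add_left, measure_preimage_add]
  have hdisj : Pairwise (Function.onFun Disjoint B) := by
    intro n m hnm
    refine Set.disjoint_left.2 ?_
    rintro _ ⟨_, ⟨v, hv, rfl⟩, rfl⟩ ⟨_, ⟨v', hv', rfl⟩, h⟩
    simp only [← map_add] at h
    have h1 := hφH _ (QuotientAddGroup.eq.1 h)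
    simp only [map_add, map_neg, hφx] at h1
    have h2 := abs_lt.1 hv.2.2
    have h3 := abs_lt.1 hv'.2.2
    have h4 : (n : ℝ) < m + 1 := by linarith [h2.1, h2.2, h3.1, h3.2]
    have h5 : (m : ℝ) < n + 1 := by linarith [h2.1, h2.2, h3.1, h3.2]
    norm_cast at h4 h5
    omega
  have hsub : (⋃ n, B n) ⊆ A \ ((fun x => x + π b) '' A) := by
    refine Set.iUnion_subset fun n => ?_
    rintro _ ⟨_, ⟨v, hv, rfl⟩, rfl⟩
    refine ⟨by simpa [x] using (ht n v hv.1).1, ?_⟩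
    rintro ⟨z, hz, hzb⟩
    refine (ht n (b - v) hv.2.1).2 ?_
    have : z = π ((n : ℝ) • w + t n • b - (b - v)) := by
      have h : z + π b = π (x n) + π v := hzb
      rw [eq_sub_of_add_eq h, ← map_add, ← map_sub]
      congr 1
      simp only [x]
      abel
    rwa [this] at hz
  refine measure_mono_top hsub ?_
  rw [measure_iUnion hdisj fun n => (hBo n).measurableSet]
  simp_rw [hBμ]
  exact ENNReal.tsum_const_eq_top_of_ne_zero
    ((hπo _ hDo).measure_pos μ (hDne.image _)).ne'

end Cone

/-! ### Interiors of convex cones -/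

section Cone

variable {E : Type*} [NormedAddCommGroup E] [NormedSpace ℝ E] {P : Set E}

open scoped Pointwise in
theorem smul_mem_interior (hcone : ∀ c : ℝ, 0 ≤ c → ∀ x ∈ P, c • x ∈ P) :
    ∀ t : ℝ, 0 < t → ∀ x ∈ interior P, t • x ∈ interior P := by
  intro t ht x hx
  have ho : IsOpen (t • interior P) := isOpen_interior.smul₀ ht.ne'
  refine interior_maximal ?_ ho (Set.smul_mem_smul_set hx)
  rintro _ ⟨y, hy, rfl⟩
  exact hcone t ht.le y (interior_subset hy)

theorem add_mem_interior (hconv : Convex ℝ P)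
    (hcone : ∀ c : ℝ, 0 ≤ c → ∀ x ∈ P, c • x ∈ P) :
    ∀ x ∈ interior P, ∀ y ∈ interior P, x + y ∈ interior P := by
  intro x hx y hy
  have h := hconv.interior hx hy (a := 1 / 2) (b := 1 / 2) (by norm_num) (by norm_num)
    (by norm_num)
  have h2 := smul_mem_interior hcone 2 (by norm_num) _ h
  convert h2 using 1
  module

theorem interior_nonempty_of_spanning [FiniteDimensional ℝ E] (hconv : Convex ℝ P)
    (hcone : ∀ c : ℝ, 0 ≤ c → ∀ x ∈ P, c • x ∈ P)
    (hspan : ∀ x : E, ∃ a ∈ P, ∃ b ∈ P, x = a - b) : (interior P).Nonempty := by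
  obtain ⟨a, ha, -⟩ := hspan 0
  have h0 : (0 : E) ∈ P := by simpa using hcone 0 le_rfl a ha
  rw [hconv.interior_nonempty_iff_affineSpan_eq_top]
  refine (AffineSubspace.affineSpan_eq_top_iff_vectorSpan_eq_top_of_nonempty ℝ E E ⟨0, h0⟩).2 ?_
  refine (Submodule.eq_top_iff').2 fun x => ?_
  obtain ⟨a, ha, b, hb, rfl⟩ := hspan x
  exact vsub_mem_vectorSpan ℝ ha hb

end Cone

/-! ### Vanishing of the homomorphism part -/

/-- Codimension at least two: the homomorphism part of every `1`-cocycle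
`u ∈ Z¹(Ω, L_A)` on an `Ω`-space `A ⊆ ℝ^d/H` vanishes, i.e.
`u_a(x) = f(x + a) − f(x)` for a single Borel function `f`. -/
theorem one_cocycle_form_codim_ge_two
    {d : ℕ} (hd : 2 ≤ d)
    (P : Set (EuclideanSpace ℝ (Fin d)))
    (hPclosed : IsClosed P) (hPconvex : Convex ℝ P)
    (hPcone : ∀ (c : ℝ), 0 ≤ c → ∀ x ∈ P, c • x ∈ P)
    (hPspan : ∀ x : EuclideanSpace ℝ (Fin d), ∃ a ∈ P, ∃ b ∈ P, x = a - b)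
    (hPpointed : ∀ x ∈ P, -x ∈ P → x = 0)
    (H : AddSubgroup (EuclideanSpace ℝ (Fin d)))
    (hHclosed : IsClosed (H : Set (EuclideanSpace ℝ (Fin d))))
    (hcodim : Module.finrank ℝ
      (Submodule.span ℝ (H : Set (EuclideanSpace ℝ (Fin d)))) ≤ d - 2)
    [MeasurableSpace (EuclideanSpace ℝ (Fin d) ⧸ H)]
    [BorelSpace (EuclideanSpace ℝ (Fin d) ⧸ H)]
    (μ : Measure (EuclideanSpace ℝ (Fin d) ⧸ H)) [μ.IsAddHaarMeasure]
    (A : Set (EuclideanSpace ℝ (Fin d) ⧸ H)) (hAmeas : MeasurableSet A)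
    (hAne : A.Nonempty) (hAproper : A ≠ Set.univ)
    (hAinv : ∀ x ∈ A, ∀ a ∈ interior P, x + QuotientAddGroup.mk' H a ∈ A)
    (u : EuclideanSpace ℝ (Fin d) → (EuclideanSpace ℝ (Fin d) ⧸ H) → ℂ)
    (humeas : ∀ a ∈ interior P, Measurable (u a))
    (huL : ∀ a ∈ interior P, ∀ b ∈ interior P,
      ∫⁻ x in A \ ((fun x => x + QuotientAddGroup.mk' H b) '' A),
        (‖u a x‖₊ : ENNReal) ^ 2 ∂μ < ⊤)
    (hucoc : ∀ a ∈ interior P, ∀ b ∈ interior P,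
      ∀ᵐ x ∂μ.restrict A, u (a + b) x = u a x + u b (x + QuotientAddGroup.mk' H a))
    (humeas2 : ∀ ξ : (EuclideanSpace ℝ (Fin d) ⧸ H) → ℂ, Measurable ξ →
      (∀ b ∈ interior P, ∫⁻ x in A \ ((fun x => x + QuotientAddGroup.mk' H b) '' A),
        (‖ξ x‖₊ : ENNReal) ^ 2 ∂μ < ⊤) →
      ∀ c ∈ interior P, Measurable (fun b : interior P =>
        ∫ x in A \ ((fun x => x + QuotientAddGroup.mk' H c) '' A),
          u b.1 x * (starRingEnd ℂ) (ξ x) ∂μ)) :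
    ∃ f : (EuclideanSpace ℝ (Fin d) ⧸ H) → ℂ, Measurable f ∧
      ∀ a ∈ interior P, ∀ᵐ x ∂μ.restrict A,
        u a x = f (x + QuotientAddGroup.mk' H a) - f x := by
  classical
  have := hHclosed
  set π := QuotientAddGroup.mk' H with hπ
  have hπo : IsOpenMap π := QuotientAddGroup.isOpenMap_coe
  have hπc : Continuous π := QuotientAddGroup.continuous_mk
  have hπs : Function.Surjective π := QuotientAddGroup.mk'_surjective H
  set Ω := interior P with hΩ
  have ho : IsOpen Ω := isOpen_interior
  have hsmul := smul_mem_interior hPcone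
  have hadd := add_mem_interior hPconvex hPcone
  rw [← hΩ] at hsmul hadd
  obtain ⟨c, hc⟩ : Ω.Nonempty := interior_nonempty_of_spanning hPconvex hPcone hPspan
  let S : Set (EuclideanSpace ℝ (Fin d) ⧸ H) := π '' Ω
  have hSo : IsOpen S := hπo _ ho
  have hSS : ∀ s ∈ S, ∀ t ∈ S, s + t ∈ S := by
    rintro _ ⟨a, ha, rfl⟩ _ ⟨b, hb, rfl⟩
    exact ⟨a + b, hadd a ha b hb, map_add _ _ _⟩
  have hAS : ∀ x ∈ A, ∀ s ∈ S, x + s ∈ A := by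
    rintro x hx _ ⟨a, ha, rfl⟩
    exact hAinv x hx a ha
  have hcS : π c ∈ S := ⟨c, hc, rfl⟩
  have hev : ∀ x, ∀ᶠ n : ℕ in atTop, n • π c - x ∈ S := by
    intro x
    obtain ⟨e, rfl⟩ := hπs x
    filter_upwards [tendsto_natCast_atTop_atTop.eventually (eventually_smul_sub_mem ho hsmul hc e)]
      with n hn
    refine ⟨_, hn, ?_⟩
    rw [map_sub, Nat.cast_smul_eq_nsmul, map_nsmul]
  have hcoc : ∀ a ∈ Ω, ∀ b ∈ Ω, ∀ᵐ x ∂μ, x ∈ A → u (a + b) x = u a x + u b (x + π a) :=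
    fun a ha b hb => (ae_restrict_iff' hAmeas).1 (hucoc a ha b hb)
  have hmem2 : ∀ a ∈ Ω, ∀ b ∈ Ω, MemLp (u a) 2 (μ.restrict (A \ ((fun x => x + π b) '' A))) :=
    fun a ha b hb => (memLp_two_iff_lintegral (humeas a ha)).2 (huL a ha b hb)
  have hdiff : ∀ b, MeasurableSet (A \ ((fun x => x + π b) '' A)) := fun b => by
    refine hAmeas.diff ?_
    rw [Set.image_add_right]
    exact hAmeas.preimage (measurable_add_const _)
  -- `u a` depends only on the class of `a` modulo `H`.
  have hdesc : ∀ a ∈ Ω, ∀ a' ∈ Ω, π a = π a' → ∀ᵐ x ∂μ, x ∈ A → u a x = u a' x := by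
    intro a ha a' ha' haa
    obtain ⟨k, hk⟩ := exists_ae_eq_const_of_invariant (μ := μ) hSo.measurableSet hAmeas hAne hAS
      hcS hev (D := fun x => u a x - u a' x) ((humeas a ha).sub (humeas a' ha')) (by
        rintro _ ⟨b, hb, rfl⟩
        filter_upwards [hcoc a ha b hb, hcoc b hb a ha, hcoc a' ha' b hb, hcoc b hb a' ha']
          with x h1 h2 h3 h4 hx
        have h1 := h1 hx
        have h3 := h3 hx
        rw [add_comm a b, h2 hx] at h1
        rw [add_comm a' b, h4 hx, ← haa] at h3
        linear_combination h1 - h3)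
    have hLk : MemLp (fun _ => k) 2 (μ.restrict (A \ ((fun x => x + π c) '' A))) := by
      refine ((hmem2 a ha c hc).sub (hmem2 a' ha' c hc)).ae_eq ?_
      filter_upwards [ae_restrict_mem (hdiff c), ae_restrict_of_ae hk] with x hx hxk
      exact hxk hx.1
    rw [memLp_const_iff (by norm_num) (by norm_num), Measure.restrict_apply_univ,
      measure_diff_eq_top ho hadd hsmul H
        (by rw [finrank_euclideanSpace_fin]; omega) μ hAne hAproper hAinv hc] at hLk
    have hk0 : k = 0 := hLk.resolve_right (lt_irrefl _)
    filter_upwards [hk] with x hx hxA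
    exact sub_eq_zero.1 ((hx hxA).trans hk0)
  -- Choosing lifts turns `u` into a family indexed by the open semigroup `S` of the quotient.
  have hr : ∀ s : S, ∃ a ∈ Ω, π a = s := fun s => s.2
  choose r hrΩ hrπ using hr
  let B : ℕ → Set (EuclideanSpace ℝ (Fin d) ⧸ H) :=
    fun n => A \ ((fun x => x + π (((n : ℝ) + 1) • c)) '' A)
  have hnc : ∀ n : ℕ, ((n : ℝ) + 1) • c ∈ Ω := fun n => hsmul _ (by positivity) c hc
  obtain ⟨U, hU, hUv⟩ := exists_measurable_uncurry_of_iUnion μ A B (fun n => hdiff _)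
    (by
      intro x hx
      by_contra hcon
      simp only [B, Set.mem_iUnion, Set.mem_sdiff, hx, true_and, not_exists, not_not] at hcon
      obtain ⟨z, hz⟩ := (Set.ne_univ_iff_exists_notMem A).1 hAproper
      obtain ⟨n, hn⟩ := eventually_atTop.1 (hev (x - z))
      obtain ⟨y, hy, hyx⟩ := hcon n
      refine hz ?_
      have h1 : ((n : ℝ) + 1) • c = (n + 1) • c := by
        rw [← Nat.cast_smul_eq_nsmul ℝ]; push_cast; rfl
      simp only [h1, map_nsmul] at hyx
      have := hAS y hy _ (hn (n + 1) (Nat.le_succ n))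
      rw [← hyx] at this
      convert this using 1
      abel)
    (fun s : S => u (r s)) (fun s n => hmem2 _ (hrΩ s) _ (hnc n))
    (by
      intro n ξ hξ hξL
      have : StandardBorelSpace Ω := ho.measurableSet.standardBorel
      let p : Ω → S := fun a => ⟨π a, a, a.2, rfl⟩
      have hp : Measurable p := (hπc.measurable.comp measurable_subtype_coe).subtype_mk
      have hps : Function.Surjective p := by
        rintro ⟨_, a, ha, rfl⟩
        exact ⟨⟨a, ha⟩, rfl⟩
      -- Measurability on `S` can be tested on `Ω`, as `Ω → S` is a Borel surjection from a
      -- standard Borel space.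
      refine (hp.measurable_comp_iff_of_surjective hps).1 ?_
      have h := humeas2 ξ hξ (fun b hb => (memLp_two_iff_lintegral hξ).1 (hξL.restrict _)) _ (hnc n)
      convert h using 2 with a
      refine integral_congr_ae ?_
      filter_upwards [ae_restrict_mem (hdiff _), ae_restrict_of_ae
        (hdesc _ (hrΩ (p a)) a a.2 (hrπ (p a)))] with x hx hxe
      simp only [hxe hx.1])
  have hemb : MeasurableEmbedding
      (Prod.map Subtype.val id : S × (EuclideanSpace ℝ (Fin d) ⧸ H) → _) :=
    (MeasurableEmbedding.subtype_coe hSo.measurableSet).prodMap MeasurableEmbedding.id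
  obtain ⟨V, hV, hVU⟩ := hemb.exists_measurable_extend hU (fun _ => ⟨0⟩)
  have hVu : ∀ a ∈ Ω, ∀ᵐ x ∂μ, x ∈ A → V (π a, x) = u a x := by
    intro a ha
    let s : S := ⟨π a, a, ha, rfl⟩
    filter_upwards [hUv s, hdesc _ (hrΩ s) a ha (hrπ s)] with x h1 h2 hx
    rw [← h2 hx, ← h1 hx]
    exact congrFun hVU (s, x)
  obtain ⟨f, hf, hfV⟩ := exists_primitive (μ := μ) hSo.measurableSet
    (hSo.measure_pos μ ⟨_, hcS⟩).ne' hSS hAmeas hcS hev hAS (U := fun s x => V (s, x)) hV (by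
      rintro _ ⟨a, ha, rfl⟩ _ ⟨b, hb, rfl⟩
      filter_upwards [hcoc a ha b hb, hVu a ha, hVu _ (hadd a ha b hb),
        (eventually_add_right_iff μ (π a)).2 (hVu b hb)] with x h1 h2 h3 h4 hx
      rw [← map_add, h3 hx, h2 hx, h4 (hAinv x hx a ha), h1 hx])
  refine ⟨f, hf, fun a ha => (ae_restrict_iff' hAmeas).2 ?_⟩
  filter_upwards [hfV (π a) ⟨a, ha, rfl⟩, hVu a ha] with x h1 h2 hx
  rw [← h2 hx, h1 hx]
end
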